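/- For the BB(1̄, 1̄, 3, 3) code, with f = 1 + x + x^{-1} y³ and g = 1 + y + y^{-1} x³ in R, the mobility sublattice is 12ℤ × 12ℤ: for all integers i, j, the monomial relation x^{i} y^{j} − 1 ∈ Ideal.span {f, g} holds if and only if 12 divides i and 12 divides j. -/

import Mathlib

noncomputable section

/-- The Laurent polynomial ring `F₂[x^±, y^±]` as a group algebra. -/
abbrev LaurentR : Type := AddMonoidAlgebra (ZMod 2) (ℤ × ℤ)

/-- The monomial `x^i y^j`. -/
def mono (i j : ℤ) : LaurentR := AddMonoidAlgebra.single (i, j) 1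

/-- The trace `F₄ → F₂` of `ω ^ k`, where `ω` is a primitive cube root of unity. -/
def traceOmegaPow (k : ZMod 12) : ZMod 2 := if k.val % 3 = 0 then 0 else 1

/-- The values on monomials `x^i y^j` of a linear functional vanishing on `(f, g)`. It is the sum of
the trace of the value at the simple point `(ω, ω)` and the trace of the `u²`-coefficient at the
triple point `x = ω(1 + u)`, `y = ω⁻¹(1 + ωu)`, `u³ = 0`. -/
def monoFunctional (i j : ZMod 12) : ZMod 2 :=
  traceOmegaPow (i + j) + (i.val.choose 2 : ZMod 2) * traceOmegaPow (i - j) +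
    (i.val * j.val : ℕ) * traceOmegaPow (i - j + 1) +
    (j.val.choose 2 : ZMod 2) * traceOmegaPow (i - j + 2)

lemma monoFunctional_recurrence_f : ∀ i j : ZMod 12,
    monoFunctional i j + monoFunctional (i + 1) j + monoFunctional (i - 1) (j + 3) = 0 := by
  decide +kernel

lemma monoFunctional_recurrence_g : ∀ i j : ZMod 12,
    monoFunctional i j + monoFunctional i (j + 1) + monoFunctional (i + 3) (j - 1) = 0 := by
  decide +kernel

lemma eq_zero_of_monoFunctional_periodic : ∀ i j : ZMod 12,
    (∀ a b, monoFunctional (a + i) (b + j) = monoFunctional a b) → i = 0 ∧ j = 0 := by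
  decide +kernel

lemma mono_mul_mono (i j k l : ℤ) : mono i j * mono k l = mono (i + k) (j + l) := by
  simp [mono, AddMonoidAlgebra.single_mul_single]

/-- The linear functional on the Laurent polynomial ring with values `monoFunctional`. -/
def laurentFunctional : LaurentR →+ ZMod 2 :=
  AddMonoidAlgebra.liftNC (AddMonoidHom.id (ZMod 2))
    fun p : Multiplicative (ℤ × ℤ) => monoFunctional (p.toAdd.1 : ZMod 12) (p.toAdd.2 : ZMod 12)

lemma laurentFunctional_mono (i j : ℤ) :
    laurentFunctional (mono i j) = monoFunctional i j := by
  simp [laurentFunctional, mono]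

/-- An additive map killing all monomial multiples of `p` kills all multiples of `p`. -/
lemma map_mul_eq_zero_of_mono (L : LaurentR →+ ZMod 2) (p : LaurentR)
    (h : ∀ i j, L (mono i j * p) = 0) (r : LaurentR) : L (r * p) = 0 := by
  induction r using AddMonoidAlgebra.induction_linear with
  | zero => simp
  | add r s hr hs => rw [add_mul, map_add, hr, hs, add_zero]
  | single a c =>
    obtain rfl | rfl : c = 0 ∨ c = 1 := by revert c; decide
    · simp
    · exact h a.1 a.2

lemma laurentFunctional_eq_zero_of_mem {r : LaurentR}
    (hr : r ∈ Ideal.span ({1 + mono 1 0 + mono (-1) 3,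
      1 + mono 0 1 + mono 3 (-1)} : Set LaurentR)) : laurentFunctional r = 0 := by
  obtain ⟨a, b, rfl⟩ := Ideal.mem_span_pair.mp hr
  rw [map_add, map_mul_eq_zero_of_mono _ _ _ a, map_mul_eq_zero_of_mono _ _ _ b, add_zero]
  · intro i j
    simpa [mul_add, mono_mul_mono, laurentFunctional_mono, ← sub_eq_add_neg]
      using monoFunctional_recurrence_g i j
  · intro i j
    simpa [mul_add, mono_mul_mono, laurentFunctional_mono, ← sub_eq_add_neg]
      using monoFunctional_recurrence_f i j

/-- In characteristic two, a unit `x` with `x³ = y² + y` and `y³ = x² + x` satisfies `x¹² = 1`. -/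
lemma pow_twelve_eq_one {A : Type*} [CommRing A] (h2 : (2 : A) = 0) {x y : A} (hu : IsUnit x)
    (hx : x ^ 3 = y ^ 2 + y) (hy : y ^ 3 = x ^ 2 + x) : x ^ 12 = 1 := by
  have hrel : 1 + x + y + x * y + x ^ 2 * y ^ 2 = 0 := by
    refine hu.mul_left_cancel ?_
    linear_combination y ^ 2 * hx + (y + 1) * hy + (x + x ^ 2 + x * y + x ^ 2 * y) * h2
  have hx4 : x ^ 4 = x * y ^ 2 + x * y := by linear_combination x * hx
  have hy4 : y ^ 4 = x ^ 2 * y + x * y := by linear_combination y * hy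
  have hy8 : y ^ 8 = x + y + x ^ 2 * y + x ^ 2 * y ^ 2 := by
    linear_combination (y ^ 4 + x ^ 2 * y + x * y + x) * hy4 + y ^ 2 * hx4 + (x + 1) * hy +
      (y + 1) * hx + (x ^ 3 * y ^ 2 + x ^ 2 + y ^ 2) * h2
  have hx12 : x ^ 12 = y ^ 8 + y ^ 4 := by
    linear_combination (x ^ 3 + (y ^ 2 + y)) * (x ^ 6 + (y ^ 2 + y) ^ 2) * hx +
      (2 * y ^ 7 + 3 * y ^ 6 + 2 * y ^ 5) * h2
  linear_combination hx12 + hy8 + hy4 + hrel + (x ^ 2 * y - 1) * h2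

/-- The monomials as a homomorphism into the units of a quotient of the Laurent ring. -/
def monoUnitsHom (I : Ideal LaurentR) : Multiplicative (ℤ × ℤ) →* (LaurentR ⧸ I)ˣ :=
  MonoidHom.toHomUnits
    ((Ideal.Quotient.mk I : LaurentR →* LaurentR ⧸ I).comp (AddMonoidAlgebra.of (ZMod 2) (ℤ × ℤ)))

lemma coe_monoUnitsHom (I : Ideal LaurentR) (i j : ℤ) :
    (monoUnitsHom I (Multiplicative.ofAdd (i, j)) : LaurentR ⧸ I) =
      Ideal.Quotient.mk I (mono i j) := rfl

lemma mono_sub_one_mem_iff (I : Ideal LaurentR) (i j : ℤ) :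
    mono i j - 1 ∈ I ↔ monoUnitsHom I (Multiplicative.ofAdd (i, j)) = 1 := by
  rw [Units.ext_iff, coe_monoUnitsHom, Units.val_one, ← map_one (Ideal.Quotient.mk I),
    Ideal.Quotient.eq]

/-- For the BB(1̄, 1̄, 3, 3) code, with `f = 1 + x + x⁻¹y³` and `g = 1 + y + y⁻¹x³`, the
mobility sublattice is `12ℤ × 12ℤ`: for all integers `i, j`,
`x^i y^j − 1 ∈ (f, g)` if and only if `12 ∣ i` and `12 ∣ j`. -/
theorem bb_1133_mobility_sublattice (i j : ℤ) :
    mono i j - 1 ∈ Ideal.span ({1 + mono 1 0 + mono (-1) 3,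
      1 + mono 0 1 + mono 3 (-1)} : Set LaurentR) ↔ (12 : ℤ) ∣ i ∧ (12 : ℤ) ∣ j := by
  constructor
  · intro h
    have key := eq_zero_of_monoFunctional_periodic i j fun a b => by
      have := laurentFunctional_eq_zero_of_mem (Ideal.mul_mem_left _ (mono a.val b.val) h)
      simpa [mul_sub, mono_mul_mono, laurentFunctional_mono, sub_eq_zero] using this
    exact key.imp (ZMod.intCast_zmod_eq_zero_iff_dvd i 12).mp
      (ZMod.intCast_zmod_eq_zero_iff_dvd j 12).mp
  · rintro ⟨⟨a, rfl⟩, ⟨b, rfl⟩⟩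
    set I := Ideal.span ({1 + mono 1 0 + mono (-1) 3,
      1 + mono 0 1 + mono 3 (-1)} : Set LaurentR)
    rw [mono_sub_one_mem_iff]
    set X := monoUnitsHom I (Multiplicative.ofAdd (1, 0)) with hX
    set Y := monoUnitsHom I (Multiplicative.ofAdd (0, 1)) with hY
    have hfac : monoUnitsHom I (Multiplicative.ofAdd (12 * a, 12 * b)) =
        (X ^ 12) ^ a * (Y ^ 12) ^ b := by
      simp only [hX, hY, ← map_pow, ← map_zpow, ← map_mul, ← ofAdd_nsmul, ← ofAdd_zsmul,
        ← ofAdd_add]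
      congr 2
      ext <;> simp [mul_comm]
    have h2 : (2 : LaurentR ⧸ I) = 0 := by
      have := congrArg (algebraMap (ZMod 2) (LaurentR ⧸ I)) (show (2 : ZMod 2) = 0 from rfl)
      simpa only [map_ofNat, map_zero] using this
    have hx : (X : LaurentR ⧸ I) ^ 3 = Y ^ 2 + Y := by
      have hmem : mono 0 1 * (1 + mono 0 1 + mono 3 (-1)) ∈ I :=
        I.mul_mem_left _ (Ideal.subset_span (by simp))
      have hexp : mono 0 1 * (1 + mono 0 1 + mono 3 (-1)) =
          mono 0 1 + mono 0 1 ^ 2 + mono 1 0 ^ 3 := by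
        simp [mul_add, pow_succ, mono_mul_mono]
      rw [hexp, ← Ideal.Quotient.eq_zero_iff_mem, map_add, map_add, map_pow, map_pow,
        ← coe_monoUnitsHom, ← coe_monoUnitsHom] at hmem
      linear_combination hmem - (Y ^ 2 + Y : LaurentR ⧸ I) * h2
    have hy : (Y : LaurentR ⧸ I) ^ 3 = X ^ 2 + X := by
      have hmem : mono 1 0 * (1 + mono 1 0 + mono (-1) 3) ∈ I :=
        I.mul_mem_left _ (Ideal.subset_span (by simp))
      have hexp : mono 1 0 * (1 + mono 1 0 + mono (-1) 3) =
          mono 1 0 + mono 1 0 ^ 2 + mono 0 1 ^ 3 := by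
        simp [mul_add, pow_succ, mono_mul_mono]
      rw [hexp, ← Ideal.Quotient.eq_zero_iff_mem, map_add, map_add, map_pow, map_pow,
        ← coe_monoUnitsHom, ← coe_monoUnitsHom] at hmem
      linear_combination hmem - (X ^ 2 + X : LaurentR ⧸ I) * h2
    have hX12 : X ^ 12 = 1 := Units.ext (by simpa using pow_twelve_eq_one h2 X.isUnit hx hy)
    have hY12 : Y ^ 12 = 1 := Units.ext (by simpa using pow_twelve_eq_one h2 Y.isUnit hy hx)
    rw [hfac, hX12, hY12, one_zpow, one_zpow, one_mul]
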